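/- Let n ≥ 3 and let T_n be the scale-free random recursive tree on vertex set {1,…,n}. For every vertex v with 1 ≤ v ≤ n−1 and every integer k with 2 ≤ k ≤ n−1, the expected number of paths of length exactly k containing v as an interior vertex strictly exceeds the expected number of paths of length exactly k containing v+1 as an interior vertex: E[p_k(v)] > E[p_k(v+1)]. -/

import Mathlib

open scoped Classical

noncomputable section

/-- A valid parent function for a recursive tree on vertices `1, …, n` (encoded on
`Fin (n+1)`, where the index `0` is unused): `f t < t` and `f t ≥ 1` for `2 ≤ t ≤ n`,
and `f` is fixed to `0` outside its domain. -/
def ValidPF (n : ℕ) (f : Fin (n+1) → Fin (n+1)) : Prop :=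
  (∀ t : Fin (n+1), t.val < 2 → (f t).val = 0) ∧
  (∀ t : Fin (n+1), 2 ≤ t.val → 1 ≤ (f t).val ∧ (f t).val < t.val)

/-- `degPF n f m v` : the degree `d_f(m, v) = 1 + #{s : 2 ≤ s ≤ m, f s = v}` of vertex
`v` in the tree on `{1, …, m}` (including the virtual edge at vertex 1). -/
def degPF (n : ℕ) (f : Fin (n+1) → Fin (n+1)) (m : ℕ) (v : Fin (n+1)) : ℕ :=
  1 + (Finset.univ.filter (fun s : Fin (n+1) => 2 ≤ s.val ∧ s.val ≤ m ∧ f s = v)).card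

/-- The probability `P_n(f) = ∏_{t=2}^{n} d_f(t-1, f t) / (2t - 3)` of the parent
function `f` under the scale-free (preferential attachment) random tree model. -/
def probPF (n : ℕ) (f : Fin (n+1) → Fin (n+1)) : ℚ :=
  ∏ t ∈ Finset.univ.filter (fun t : Fin (n+1) => 2 ≤ t.val),
    (degPF n f (t.val - 1) (f t) : ℚ) / (2 * (t.val : ℚ) - 3)

/-- The recursive tree `T_n^f` with edge set `{{t, f t} : 2 ≤ t ≤ n}` determined by a
parent function `f`. -/
def treeGraphPF (n : ℕ) (f : Fin (n+1) → Fin (n+1)) : SimpleGraph (Fin (n+1)) :=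
  SimpleGraph.fromRel (fun s t => 2 ≤ t.val ∧ f t = s)

/-- `v` is an interior vertex of the `s`–`t` path: `v ≠ s`, `v ≠ t`, and
`dist s v + dist v t = dist s t`. -/
def IsInterior {V : Type*} (G : SimpleGraph V) (v s t : V) : Prop :=
  v ≠ s ∧ v ≠ t ∧ G.dist s v + G.dist v t = G.dist s t

/-- `pexactPF n f k v` : the number of unordered pairs `{s,t}` with `dist s t = k` such
that `v` is an interior vertex of the `s`–`t` path in `T_n^f` (ordered pairs over two). -/
def pexactPF (n : ℕ) (f : Fin (n+1) → Fin (n+1)) (k : ℕ) (v : Fin (n+1)) : ℕ :=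
  (Finset.univ.filter (fun p : Fin (n+1) × Fin (n+1) =>
    (treeGraphPF n f).dist p.1 p.2 = k ∧ IsInterior (treeGraphPF n f) v p.1 p.2)).card / 2

/-!
Write `w = v + 1`. The parent functions with `f w ≠ v` contribute equally to both expectations:
exchanging the labels `v` and `w` permutes them and preserves their probabilities, because
`P_n(f)` is proportional to `∏ u, (number of children of u)!`.

The remaining parent functions are grouped by the tree `g` obtained by handing all children of
`w` over to its parent `v`. A member of the group of `g` is given by the set `B` of siblings of
`w` in `g` that are moved below `w`. Let `M` consist of the branches at `B`. In the resulting
tree, the paths with `v` but not `w` in their interior are those of `g` through `v` with no end in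
`M`, and the paths with `w` but not `v` in their interior correspond to those of `g` through `v`
with both ends in `M ∪ {v, w}`. Hence the difference `F B` of the two path counts is antitone in
`B` and satisfies `F B + F Bᶜ ≥ 0`. Up to a constant the probability is `|B|! (|Bᶜ| + 1)!`. The
symmetric weight `|B|! |Bᶜ|!` gives `F` a nonnegative mean, and by the FKG inequality the extra
factor `|Bᶜ| + 1`, which is also antitone, keeps it nonnegative.

Strictness comes from the group of the path `w, v, v - 1, …, 1, v + 2, …, n`, in which some path
of length `k` starts at `w` and continues through `v`.
-/

section WeakHom

variable {V W : Type*} {G : SimpleGraph V} {H : SimpleGraph W} {φ : V → W} {ψ : W → V}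
  {x y : V}

/-- A weak homomorphism of graphs: every edge is sent to an edge or collapsed to a vertex.
These are the maps that do not increase distances. -/
def IsWeakHom (G : SimpleGraph V) (H : SimpleGraph W) (φ : V → W) : Prop :=
  ∀ ⦃x y⦄, G.Adj x y → φ x = φ y ∨ H.Adj (φ x) (φ y)

theorem IsWeakHom.exists_walk_length_le (hφ : IsWeakHom G H φ) (p : G.Walk x y) :
    ∃ q : H.Walk (φ x) (φ y), q.length ≤ p.length := by
  induction p with
  | nil => exact ⟨.nil, le_rfl⟩
  | cons hadj p ih =>
    obtain ⟨q, hq⟩ := ih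
    rw [SimpleGraph.Walk.length_cons]
    rcases hφ hadj with heq | hadj'
    · exact ⟨q.copy heq.symm rfl, by rw [SimpleGraph.Walk.length_copy]; omega⟩
    · exact ⟨.cons hadj' q, by rw [SimpleGraph.Walk.length_cons]; omega⟩

theorem IsWeakHom.reachable (hφ : IsWeakHom G H φ) (h : G.Reachable x y) :
    H.Reachable (φ x) (φ y) := by
  obtain ⟨p⟩ := h
  obtain ⟨q, -⟩ := hφ.exists_walk_length_le p
  exact q.reachable

theorem IsWeakHom.dist_le (hφ : IsWeakHom G H φ) (h : G.Reachable x y) :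
    H.dist (φ x) (φ y) ≤ G.dist x y := by
  obtain ⟨p, hp⟩ := h.exists_walk_length_eq_dist
  obtain ⟨q, hq⟩ := hφ.exists_walk_length_le p
  exact (SimpleGraph.dist_le q).trans (hq.trans hp.le)

theorem IsWeakHom.dist_eq (hφ : IsWeakHom G H φ) (hψ : IsWeakHom H G ψ)
    (hx : ψ (φ x) = x) (hy : ψ (φ y) = y) : H.dist (φ x) (φ y) = G.dist x y := by
  have hback : H.Reachable (φ x) (φ y) → G.Reachable x y := fun h ↦ by
    simpa only [hx, hy] using hψ.reachable h
  by_cases h : G.Reachable x y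
  · refine le_antisymm (hφ.dist_le h) ?_
    simpa only [hx, hy] using hψ.dist_le (hφ.reachable h)
  · rw [SimpleGraph.dist_eq_zero_of_not_reachable h,
      SimpleGraph.dist_eq_zero_of_not_reachable (mt hback h)]

end WeakHom

section Potential

variable {V : Type*} {G : SimpleGraph V} {x y : V} {p : ℕ → V} {m : ℕ} {π : V → ℕ}

theorem exists_walk_length_eq_of_adj_succ
    (hp : ∀ i < m, G.Adj (p i) (p (i + 1))) : ∃ q : G.Walk (p 0) (p m), q.length = m := by
  induction m with
  | zero => exact ⟨.nil, rfl⟩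
  | succ m ih =>
    obtain ⟨q, hq⟩ := ih fun i hi ↦ hp i (by omega)
    exact ⟨q.concat (hp m (by omega)), by rw [SimpleGraph.Walk.length_concat, hq]⟩

theorem le_add_walk_length (hπ : ∀ ⦃x y⦄, G.Adj x y → π y ≤ π x + 1)
    (q : G.Walk x y) : π y ≤ π x + q.length := by
  induction q with
  | nil => exact le_rfl
  | cons hadj q ih =>
    have := hπ hadj
    rw [SimpleGraph.Walk.length_cons]
    omega

theorem reachable_and_dist_eq_of_adj_succ (hp : ∀ i < m, G.Adj (p i) (p (i + 1)))
    (hπ : ∀ ⦃x y⦄, G.Adj x y → π y ≤ π x + 1)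
    (hπ0 : π (p 0) = 0) (hπm : π (p m) = m) :
    G.Reachable (p 0) (p m) ∧ G.dist (p 0) (p m) = m := by
  obtain ⟨q, hq⟩ := exists_walk_length_eq_of_adj_succ hp
  obtain ⟨q', hq'⟩ := q.reachable.exists_walk_length_eq_dist
  have := le_add_walk_length hπ q'
  exact ⟨q.reachable, le_antisymm ((SimpleGraph.dist_le q).trans_eq hq) (by omega)⟩

end Potential

section Interior

variable {V W : Type*} {G : SimpleGraph V} {H : SimpleGraph W} {v w s t x : V}

theorem isInterior_comm : IsInterior G v s t ↔ IsInterior G v t s := by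
  rw [IsInterior, IsInterior, G.dist_comm (u := s) (v := t), G.dist_comm (u := s) (v := v),
    G.dist_comm (u := v) (v := t), add_comm, and_left_comm]

theorem isInterior_map_iff {e : V → W} (he : e.Injective)
    (hsv : H.dist (e s) (e v) = G.dist s v) (hvt : H.dist (e v) (e t) = G.dist v t)
    (hst : H.dist (e s) (e t) = G.dist s t) :
    IsInterior H (e v) (e s) (e t) ↔ IsInterior G v s t := by
  simp only [IsInterior, he.ne_iff, hsv, hvt, hst]

theorem IsInterior.reachable_left (h : IsInterior G v s t) (hst : G.dist s t ≠ 0) :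
    G.Reachable s v := by
  by_cases hsv : G.dist s v = 0
  · have hvt : G.dist v t ≠ 0 := by have := h.2.2; omega
    exact (SimpleGraph.Reachable.of_dist_ne_zero hst).trans
      (SimpleGraph.Reachable.of_dist_ne_zero hvt).symm
  · exact SimpleGraph.Reachable.of_dist_ne_zero hsv

theorem IsInterior.of_adj_of_dist_eq (h : IsInterior G v s t) (hst : G.dist s t ≠ 0)
    (hvw : G.Adj v w) (hws : w ≠ s) (hd : G.dist s v = G.dist s w + 1) :
    IsInterior G w s t := by
  have hvw1 : G.dist v w = 1 := SimpleGraph.dist_eq_one_iff_adj.2 hvw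
  have hsw : G.Reachable s w := (h.reachable_left hst).trans hvw.reachable
  refine ⟨hws, ?_, le_antisymm ?_ (hsw.dist_triangle_left t)⟩
  · rintro rfl
    have := h.2.2
    omega
  · have := hvw.symm.reachable.dist_triangle_left t
    rw [G.dist_comm (u := w) (v := v), hvw1] at this
    have := h.2.2
    omega

/-- `w` is a leaf of `G` hanging from `v`. -/
def IsPendant (G : SimpleGraph V) (v w : V) : Prop :=
  ∀ x, G.Adj w x ↔ x = v

theorem IsPendant.adj (h : IsPendant G v w) : G.Adj v w :=
  ((h v).2 rfl).symm

theorem IsPendant.dist_eq (h : IsPendant G v w) (hr : G.Reachable x w) (hx : x ≠ w) :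
    G.dist x w = G.dist x v + 1 := by
  apply le_antisymm
  · simpa [SimpleGraph.dist_eq_one_iff_adj.2 h.adj] using h.adj.reachable.dist_triangle_right x
  · obtain ⟨p, hp⟩ := hr.symm.exists_walk_length_eq_dist
    cases p with
    | nil => exact absurd rfl hx
    | cons hadj p =>
      obtain rfl := (h _).1 hadj
      rw [SimpleGraph.Walk.length_cons] at hp
      rw [G.dist_comm, G.dist_comm (v := w), ← hp]
      exact Nat.succ_le_succ (SimpleGraph.dist_le p)

theorem IsPendant.not_isInterior (h : IsPendant G v w) (hst : G.dist s t ≠ 0) :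
    ¬ IsInterior G w s t := by
  intro hi
  have hsw : G.Reachable s w := hi.reachable_left hst
  have htw : G.Reachable t w :=
    (isInterior_comm.1 hi).reachable_left (by rwa [G.dist_comm])
  have hds := h.dist_eq hsw hi.1.symm
  have hdt := h.dist_eq htw hi.2.1.symm
  have htri := (hsw.trans h.adj.symm.reachable).dist_triangle_left t
  have hwt := hi.2.2
  rw [G.dist_comm (u := v) (v := t)] at htri
  rw [G.dist_comm (u := w) (v := t)] at hwt
  omega

end Interior

section Transplant

variable {V : Type*} {G G' : SimpleGraph V} {v w s t x y : V} {M : Set V}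

/-- `G'` arises from `G`, in which `w` is a leaf hanging from `v`, by detaching from `v` the
branches making up `M` and attaching them to `w` instead. -/
structure IsTransplant (G G' : SimpleGraph V) (v w : V) (M : Set V) : Prop where
  isPendant : IsPendant G v w
  left_notMem : v ∉ M
  right_notMem : w ∉ M
  adj_iff_of_notMem : ∀ ⦃x y⦄, x ∉ M → y ∉ M → (G'.Adj x y ↔ G.Adj x y)
  adj_iff_of_mem : ∀ ⦃x y⦄, x ∈ M → y ∈ M → (G'.Adj x y ↔ G.Adj x y)
  eq_left : ∀ ⦃x y⦄, x ∈ M → y ∉ M → G.Adj x y → y = v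
  eq_right : ∀ ⦃x y⦄, x ∈ M → y ∉ M → G'.Adj x y → y = w
  adj_right_iff : ∀ ⦃x⦄, x ∈ M → (G'.Adj x w ↔ G.Adj x v)

namespace IsTransplant

theorem left_ne_right (h : IsTransplant G G' v w M) : v ≠ w :=
  h.isPendant.adj.ne

theorem adj (h : IsTransplant G G' v w M) : G'.Adj v w :=
  (h.adj_iff_of_notMem h.left_notMem h.right_notMem).2 h.isPendant.adj

theorem isWeakHom_collapse_left (h : IsTransplant G G' v w M) :
    IsWeakHom G G' fun x ↦ if x ∈ M then v else x := by
  intro x y hxy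
  by_cases hx : x ∈ M <;> by_cases hy : y ∈ M <;> simp only [hx, hy, if_true, if_false]
  · exact Or.inl trivial
  · exact Or.inl (h.eq_left hx hy hxy).symm
  · exact Or.inl (h.eq_left hy hx hxy.symm)
  · exact Or.inr ((h.adj_iff_of_notMem hx hy).2 hxy)

theorem isWeakHom_collapse_right (h : IsTransplant G G' v w M) :
    IsWeakHom G' G fun x ↦ if x ∈ M then w else x := by
  intro x y hxy
  by_cases hx : x ∈ M <;> by_cases hy : y ∈ M <;> simp only [hx, hy, if_true, if_false]
  · exact Or.inl trivial
  · exact Or.inl (h.eq_right hx hy hxy).symm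
  · exact Or.inl (h.eq_right hy hx hxy.symm)
  · exact Or.inr ((h.adj_iff_of_notMem hx hy).1 hxy)

theorem dist_eq_of_notMem (h : IsTransplant G G' v w M) (hx : x ∉ M) (hy : y ∉ M) :
    G'.dist x y = G.dist x y := by
  simpa only [hx, hy, if_false] using
    h.isWeakHom_collapse_left.dist_eq h.isWeakHom_collapse_right (x := x) (y := y)
      (by simp only [hx, if_false]) (by simp only [hy, if_false])

/-- Exchanges `v` and `w`, fixes the branches in `M` and collapses all other vertices to `w`. -/
def flip (v w : V) (M : Set V) (x : V) : V :=
  if x ∈ M then x else if x = w then v else w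

theorem flip_of_mem (hx : x ∈ M) : flip v w M x = x :=
  if_pos hx

theorem flip_right (h : IsTransplant G G' v w M) : flip v w M w = v := by
  rw [flip, if_neg h.right_notMem, if_pos rfl]

theorem flip_left (h : IsTransplant G G' v w M) : flip v w M v = w := by
  rw [flip, if_neg h.left_notMem, if_neg h.left_ne_right]

theorem flip_eq_or_eq (hx : x ∉ M) : flip v w M x = v ∨ flip v w M x = w := by
  rw [flip, if_neg hx]
  split_ifs
  exacts [Or.inl rfl, Or.inr rfl]

theorem flip_eq_swap (h : IsTransplant G G' v w M) (hx : x ∈ insert v (insert w M)) :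
    flip v w M x = Equiv.swap v w x := by
  rcases hx with rfl | rfl | hx
  · rw [h.flip_left, Equiv.swap_apply_left]
  · rw [h.flip_right, Equiv.swap_apply_right]
  · rw [flip_of_mem hx, Equiv.swap_apply_of_ne_of_ne (ne_of_mem_of_not_mem hx h.left_notMem)
      (ne_of_mem_of_not_mem hx h.right_notMem)]

theorem isWeakHom_flip (hvw : G'.Adj v w)
    (hM : ∀ ⦃x y⦄, x ∈ M → y ∈ M → G.Adj x y → G'.Adj x y)
    (hMc : ∀ ⦃x y⦄, x ∈ M → y ∉ M → G.Adj x y → G'.Adj x (flip v w M y)) :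
    IsWeakHom G G' (flip v w M) := by
  intro x y hxy
  by_cases hx : x ∈ M <;> by_cases hy : y ∈ M
  · rw [flip_of_mem hx, flip_of_mem hy]
    exact Or.inr (hM hx hy hxy)
  · rw [flip_of_mem hx]
    exact Or.inr (hMc hx hy hxy)
  · rw [flip_of_mem hy]
    exact Or.inr (hMc hy hx hxy.symm).symm
  · rcases flip_eq_or_eq (v := v) (w := w) hx with hx | hx <;>
      rcases flip_eq_or_eq (v := v) (w := w) hy with hy | hy <;> rw [hx, hy]
    exacts [Or.inl rfl, Or.inr hvw, Or.inr hvw.symm, Or.inl rfl]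

theorem dist_swap (h : IsTransplant G G' v w M) (hx : x ∈ insert v (insert w M))
    (hy : y ∈ insert v (insert w M)) :
    G'.dist (Equiv.swap v w x) (Equiv.swap v w y) = G.dist x y := by
  have hto : IsWeakHom G G' (flip v w M) :=
    isWeakHom_flip h.adj (fun _ _ hx hy ↦ (h.adj_iff_of_mem hx hy).2) fun a b ha hb hab ↦ by
      rwa [h.eq_left ha hb hab, h.flip_left, h.adj_right_iff ha, ← h.eq_left ha hb hab]
  have hfrom : IsWeakHom G' G (flip v w M) :=
    isWeakHom_flip h.isPendant.adj (fun _ _ hx hy ↦ (h.adj_iff_of_mem hx hy).1)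
      fun a b ha hb hab ↦ by
        rwa [h.eq_right ha hb hab, h.flip_right, ← h.adj_right_iff ha, ← h.eq_right ha hb hab]
  have hinv : ∀ z ∈ insert v (insert w M), flip v w M (flip v w M z) = z := by
    rintro z (rfl | rfl | hz)
    · rw [h.flip_left, h.flip_right]
    · rw [h.flip_right, h.flip_left]
    · rw [flip_of_mem hz, flip_of_mem hz]
  rw [← h.flip_eq_swap hx, ← h.flip_eq_swap hy]
  exact hto.dist_eq hfrom (hinv x hx) (hinv y hy)

theorem dist_left_of_mem (h : IsTransplant G G' v w M) (hs : s ∈ M)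
    (hr : G'.Reachable s v) : G'.dist s v = G'.dist s w + 1 := by
  have hsv : s ≠ v := ne_of_mem_of_not_mem hs h.left_notMem
  have hsw : s ≠ w := ne_of_mem_of_not_mem hs h.right_notMem
  have hmem : s ∈ insert v (insert w M) := .inr (.inr hs)
  have hdv := h.dist_swap hmem (.inr (.inl rfl) : w ∈ insert v (insert w M))
  have hdw := h.dist_swap hmem (.inl rfl : v ∈ insert v (insert w M))
  rw [Equiv.swap_apply_of_ne_of_ne hsv hsw, Equiv.swap_apply_right] at hdv
  rw [Equiv.swap_apply_of_ne_of_ne hsv hsw, Equiv.swap_apply_left] at hdw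
  have hr' : G.Reachable s w := .of_dist_ne_zero (hdv ▸ (hr.pos_dist_of_ne hsv).ne')
  rw [hdv, hdw, h.isPendant.dist_eq hr' hsw]

theorem dist_right_of_notMem (h : IsTransplant G G' v w M) (hs : s ∉ M) (hsw : s ≠ w)
    (hr : G'.Reachable s w) : G'.dist s w = G'.dist s v + 1 := by
  have hdw := h.dist_eq_of_notMem hs h.right_notMem
  have hr' : G.Reachable s w := .of_dist_ne_zero (hdw ▸ (hr.pos_dist_of_ne hsw).ne')
  rw [hdw, h.dist_eq_of_notMem hs h.left_notMem, h.isPendant.dist_eq hr' hsw]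

theorem notMem_of_isInterior_left (h : IsTransplant G G' v w M) (hst : G'.dist s t ≠ 0)
    (hv : IsInterior G' v s t) (hw : ¬ IsInterior G' w s t) : s ∉ M := fun hs ↦
  hw (hv.of_adj_of_dist_eq hst h.adj (ne_of_mem_of_not_mem hs h.right_notMem).symm
    (h.dist_left_of_mem hs (hv.reachable_left hst)))

theorem mem_of_isInterior_right (h : IsTransplant G G' v w M) (hst : G'.dist s t ≠ 0)
    (hw : IsInterior G' w s t) (hv : ¬ IsInterior G' v s t) : s ∈ insert v (insert w M) := by
  by_contra hs
  simp only [Set.mem_insert_iff, not_or] at hs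
  exact hv (hw.of_adj_of_dist_eq hst h.adj.symm (Ne.symm hs.1)
    (h.dist_right_of_notMem hs.2.2 hs.2.1 (hw.reachable_left hst)))

theorem isInterior_left_and_not_right_iff (h : IsTransplant G G' v w M)
    (hst : G'.dist s t ≠ 0) :
    IsInterior G' v s t ∧ ¬ IsInterior G' w s t ↔ s ∉ M ∧ t ∉ M ∧ IsInterior G v s t := by
  have hiff : ∀ u ∉ M, s ∉ M → t ∉ M → (IsInterior G' u s t ↔ IsInterior G u s t) :=
    fun u hu hs ht ↦ isInterior_map_iff (e := id) Function.injective_id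
      (h.dist_eq_of_notMem hs hu) (h.dist_eq_of_notMem hu ht) (h.dist_eq_of_notMem hs ht)
  constructor
  · rintro ⟨hv, hw⟩
    have hs := h.notMem_of_isInterior_left hst hv hw
    have ht := h.notMem_of_isInterior_left (by rwa [G'.dist_comm])
      (isInterior_comm.1 hv) (mt isInterior_comm.1 hw)
    exact ⟨hs, ht, (hiff v h.left_notMem hs ht).1 hv⟩
  · rintro ⟨hs, ht, hv⟩
    rw [hiff v h.left_notMem hs ht, hiff w h.right_notMem hs ht]
    exact ⟨hv, h.isPendant.not_isInterior (h.dist_eq_of_notMem hs ht ▸ hst)⟩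

theorem isInterior_right_and_not_left_iff (h : IsTransplant G G' v w M)
    (hst : G'.dist (Equiv.swap v w s) (Equiv.swap v w t) ≠ 0) :
    IsInterior G' w (Equiv.swap v w s) (Equiv.swap v w t) ∧
      ¬ IsInterior G' v (Equiv.swap v w s) (Equiv.swap v w t) ↔
    s ∈ insert v (insert w M) ∧ t ∈ insert v (insert w M) ∧ IsInterior G v s t := by
  have hswap : ∀ {x}, Equiv.swap v w x ∈ insert v (insert w M) → x ∈ insert v (insert w M) := by
    intro x hx
    by_cases hxv : x = v
    · exact .inl hxv
    by_cases hxw : x = w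
    · exact .inr (.inl hxw)
    rwa [Equiv.swap_apply_of_ne_of_ne hxv hxw] at hx
  have hiff : ∀ u ∈ insert v (insert w M), s ∈ insert v (insert w M) →
      t ∈ insert v (insert w M) →
      (IsInterior G' (Equiv.swap v w u) (Equiv.swap v w s) (Equiv.swap v w t) ↔
        IsInterior G u s t) :=
    fun u hu hs ht ↦ isInterior_map_iff (Equiv.swap v w).injective
      (h.dist_swap hs hu) (h.dist_swap hu ht) (h.dist_swap hs ht)
  have hiffv := hiff v (.inl rfl)
  have hiffw := hiff w (.inr (.inl rfl))
  rw [Equiv.swap_apply_left] at hiffv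
  rw [Equiv.swap_apply_right] at hiffw
  constructor
  · rintro ⟨hw, hv⟩
    have hs := hswap (h.mem_of_isInterior_right hst hw hv)
    have ht := hswap (h.mem_of_isInterior_right (by rwa [G'.dist_comm])
      (isInterior_comm.1 hw) (mt isInterior_comm.1 hv))
    exact ⟨hs, ht, (hiffv hs ht).1 hw⟩
  · rintro ⟨hs, ht, hv⟩
    rw [hiffv hs ht, hiffw hs ht]
    exact ⟨hv, h.isPendant.not_isInterior (h.dist_swap hs ht ▸ hst)⟩

end IsTransplant

end Transplant

section InteriorPairs

variable {V : Type*} [Fintype V] {G G' : SimpleGraph V} {v w : V} {M : Set V} {k : ℕ}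

/-- The ordered pairs of vertices at distance `k` having `v` as an interior vertex. -/
def interiorPairs (G : SimpleGraph V) (k : ℕ) (v : V) : Finset (V × V) :=
  Finset.univ.filter fun p ↦ G.dist p.1 p.2 = k ∧ IsInterior G v p.1 p.2

/-- The pairs of `interiorPairs G k v` both of whose entries lie in `U`. -/
def interiorPairsIn (G : SimpleGraph V) (k : ℕ) (v : V) (U : Set V) : Finset (V × V) :=
  (interiorPairs G k v).filter fun p ↦ p.1 ∈ U ∧ p.2 ∈ U

/-- The excess of paths of length `k` through `v` over paths of length `k` through `w`, each
path being counted once in either direction. -/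
def imbalance (G : SimpleGraph V) (k : ℕ) (v w : V) : ℚ :=
  (interiorPairs G k v).card - (interiorPairs G k w).card

theorem mem_interiorPairs {p : V × V} :
    p ∈ interiorPairs G k v ↔ G.dist p.1 p.2 = k ∧ IsInterior G v p.1 p.2 :=
  Finset.mem_filter_univ p

theorem mem_interiorPairsIn {U : Set V} {p : V × V} :
    p ∈ interiorPairsIn G k v U ↔
      (G.dist p.1 p.2 = k ∧ IsInterior G v p.1 p.2) ∧ p.1 ∈ U ∧ p.2 ∈ U := by
  rw [interiorPairsIn, Finset.mem_filter, mem_interiorPairs]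

theorem interiorPairsIn_mono {U U' : Set V} (h : U ⊆ U') :
    interiorPairsIn G k v U ⊆ interiorPairsIn G k v U' :=
  Finset.monotone_filter_right _ fun _ _ hp ↦ ⟨h hp.1, h hp.2⟩

theorem even_card_interiorPairs (hk : k ≠ 0) : Even (interiorPairs G k v).card := by
  rw [← ZMod.natCast_eq_zero_iff_even, Finset.card_eq_sum_ones, Nat.cast_sum]
  refine Finset.sum_involution (fun p _ ↦ p.swap) (fun _ _ ↦ by decide) ?_ ?_
    fun p _ ↦ p.swap_swap
  · rintro ⟨s, t⟩ hp - heq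
    obtain rfl : t = s := congrArg Prod.fst heq
    exact hk (by simpa using (mem_interiorPairs.1 hp).1.symm)
  · rintro ⟨s, t⟩ hp
    rw [mem_interiorPairs] at hp ⊢
    rwa [Prod.fst_swap, Prod.snd_swap, G.dist_comm, ← isInterior_comm]

theorem IsPendant.interiorPairs_eq_empty (h : IsPendant G v w) (hk : k ≠ 0) :
    interiorPairs G k w = ∅ :=
  Finset.eq_empty_of_forall_notMem fun _ hp ↦
    h.not_isInterior ((mem_interiorPairs.1 hp).1 ▸ hk) (mem_interiorPairs.1 hp).2

theorem card_interiorPairs_of_dist_eq {W : Type*} [Fintype W] {H : SimpleGraph W} (e : V ≃ W)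
    (he : ∀ x y, H.dist (e x) (e y) = G.dist x y) (k : ℕ) (v : V) :
    (interiorPairs H k (e v)).card = (interiorPairs G k v).card := by
  refine (Finset.card_equiv (e.prodCongr e) fun p ↦ ?_).symm
  rw [mem_interiorPairs, mem_interiorPairs, Equiv.prodCongr_apply, Prod.map_fst, Prod.map_snd,
    he, isInterior_map_iff e.injective (he _ _) (he _ _) (he _ _)]

theorem imbalance_comm (G : SimpleGraph V) (k : ℕ) (v w : V) :
    imbalance G k w v = -imbalance G k v w :=
  (neg_sub _ _).symm

theorem IsPendant.imbalance_pos (h : IsPendant G v w) {x : V} (hr : G.Reachable x v)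
    (hxv : x ≠ v) (hxw : x ≠ w) : 0 < imbalance G (G.dist x v + 1) v w := by
  have hd : G.dist x w = G.dist x v + 1 := h.dist_eq (hr.trans h.adj.reachable) hxw
  have hvw : G.dist v w = 1 := SimpleGraph.dist_eq_one_iff_adj.2 h.adj
  have hmem : (x, w) ∈ interiorPairs G (G.dist x v + 1) v :=
    mem_interiorPairs.2 ⟨hd, hxv.symm, h.adj.ne, by rw [hd, hvw]⟩
  rw [imbalance, h.interiorPairs_eq_empty (Nat.succ_ne_zero _), Finset.card_empty,
    Nat.cast_zero, sub_zero, Nat.cast_pos]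
  exact Finset.card_pos.2 ⟨_, hmem⟩

theorem imbalance_eq_card_sdiff_sub_card_sdiff :
    imbalance G k v w = ((interiorPairs G k v \ interiorPairs G k w).card : ℚ) -
      (interiorPairs G k w \ interiorPairs G k v).card := by
  have hcard : (interiorPairs G k v).card + (interiorPairs G k w \ interiorPairs G k v).card =
      (interiorPairs G k v \ interiorPairs G k w).card + (interiorPairs G k w).card := by
    rw [add_comm, Finset.card_sdiff_add_card, Finset.card_sdiff_add_card, Finset.union_comm]
  rw [imbalance, sub_eq_sub_iff_add_eq_add]
  exact_mod_cast hcard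

namespace IsTransplant

theorem interiorPairs_left_sdiff_right (h : IsTransplant G G' v w M) (hk : k ≠ 0) :
    interiorPairs G' k v \ interiorPairs G' k w = interiorPairsIn G k v Mᶜ := by
  ext ⟨s, t⟩
  simp only [Finset.mem_sdiff, mem_interiorPairs, mem_interiorPairsIn, Set.mem_compl_iff]
  constructor
  · rintro ⟨⟨hd, hv⟩, hw⟩
    obtain ⟨hs, ht, hG⟩ :=
      (h.isInterior_left_and_not_right_iff (hd ▸ hk)).1 ⟨hv, fun hw' ↦ hw ⟨hd, hw'⟩⟩
    exact ⟨⟨h.dist_eq_of_notMem hs ht ▸ hd, hG⟩, hs, ht⟩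
  · rintro ⟨⟨hd, hv⟩, hs, ht⟩
    rw [← h.dist_eq_of_notMem hs ht] at hd
    obtain ⟨hv', hw⟩ := (h.isInterior_left_and_not_right_iff (hd ▸ hk)).2 ⟨hs, ht, hv⟩
    exact ⟨⟨hd, hv'⟩, fun hw' ↦ hw hw'.2⟩

theorem interiorPairs_right_sdiff_left (h : IsTransplant G G' v w M) (hk : k ≠ 0) :
    interiorPairs G' k w \ interiorPairs G' k v =
      (interiorPairsIn G k v (insert v (insert w M))).map
        ((Equiv.swap v w).prodCongr (Equiv.swap v w)).toEmbedding := by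
  ext q
  obtain ⟨⟨s, t⟩, rfl⟩ := ((Equiv.swap v w).prodCongr (Equiv.swap v w)).surjective q
  rw [Finset.mem_map_equiv, Equiv.symm_apply_apply]
  simp only [Finset.mem_sdiff, mem_interiorPairs, mem_interiorPairsIn, Equiv.prodCongr_apply,
    Prod.map_apply]
  constructor
  · rintro ⟨⟨hd, hw⟩, hv⟩
    obtain ⟨hs, ht, hG⟩ :=
      (h.isInterior_right_and_not_left_iff (hd ▸ hk)).1 ⟨hw, fun hv' ↦ hv ⟨hd, hv'⟩⟩
    exact ⟨⟨h.dist_swap hs ht ▸ hd, hG⟩, hs, ht⟩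
  · rintro ⟨⟨hd, hv⟩, hs, ht⟩
    rw [← h.dist_swap hs ht] at hd
    obtain ⟨hw, hv'⟩ := (h.isInterior_right_and_not_left_iff (hd ▸ hk)).2 ⟨hs, ht, hv⟩
    exact ⟨⟨hd, hw⟩, fun hv'' ↦ hv' hv''.2⟩

theorem imbalance_eq (h : IsTransplant G G' v w M) (hk : k ≠ 0) :
    imbalance G' k v w = ((interiorPairsIn G k v Mᶜ).card : ℚ) -
      (interiorPairsIn G k v (insert v (insert w M))).card := by
  rw [imbalance_eq_card_sdiff_sub_card_sdiff, h.interiorPairs_left_sdiff_right hk,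
    h.interiorPairs_right_sdiff_left hk, Finset.card_map]

variable {G₁ G₂ : SimpleGraph V} {M₁ M₂ : Set V}

theorem imbalance_le (h₁ : IsTransplant G G₁ v w M₁) (h₂ : IsTransplant G G₂ v w M₂)
    (hk : k ≠ 0) (hM : M₁ ⊆ M₂) : imbalance G₂ k v w ≤ imbalance G₁ k v w := by
  rw [h₁.imbalance_eq hk, h₂.imbalance_eq hk]
  refine sub_le_sub (Nat.cast_le.2 (Finset.card_le_card ?_))
    (Nat.cast_le.2 (Finset.card_le_card ?_))
  · exact interiorPairsIn_mono (Set.compl_subset_compl.2 hM)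
  · exact interiorPairsIn_mono (Set.insert_subset_insert (Set.insert_subset_insert hM))

theorem imbalance_add_nonneg (h₁ : IsTransplant G G₁ v w M₁) (h₂ : IsTransplant G G₂ v w M₂)
    (hk : k ≠ 0) (hM : Disjoint M₁ M₂) : 0 ≤ imbalance G₁ k v w + imbalance G₂ k v w := by
  have hsub : ∀ {A B : Set V}, Disjoint A B → v ∉ B → w ∉ B →
      insert v (insert w A) ⊆ Bᶜ := fun hAB hv hw ↦
    Set.insert_subset hv (Set.insert_subset hw hAB.subset_compl_right)
  have h12 : ((interiorPairsIn G k v (insert v (insert w M₁))).card : ℚ) ≤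
      (interiorPairsIn G k v M₂ᶜ).card := Nat.cast_le.2 <| Finset.card_le_card <|
    interiorPairsIn_mono (hsub hM h₂.left_notMem h₂.right_notMem)
  have h21 : ((interiorPairsIn G k v (insert v (insert w M₂))).card : ℚ) ≤
      (interiorPairsIn G k v M₁ᶜ).card := Nat.cast_le.2 <| Finset.card_le_card <|
    interiorPairsIn_mono (hsub hM.symm h₁.left_notMem h₁.right_notMem)
  rw [h₁.imbalance_eq hk, h₂.imbalance_eq hk]
  linarith

end IsTransplant

end InteriorPairs

section Correlation

theorem fkg_antitone {L R : Type*} [DistribLattice L] [OrderTop L] [Fintype L]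
    [CommRing R] [LinearOrder R] [IsStrictOrderedRing R] {μ f g : L → R} (hμ₀ : 0 ≤ μ)
    (hf₀ : 0 ≤ f) (hf : Antitone f) (hg : Antitone g)
    (hμ : ∀ a b, μ a * μ b ≤ μ (a ⊓ b) * μ (a ⊔ b)) :
    (∑ a, μ a * f a) * ∑ a, μ a * g a ≤ (∑ a, μ a) * ∑ a, μ a * (f a * g a) := by
  have hfkg : (∑ a, μ a * f a) * ∑ a, μ a * (g a - g ⊤) ≤
      (∑ a, μ a) * ∑ a, μ a * (f a * (g a - g ⊤)) :=
    fkg (α := Lᵒᵈ) (μ := μ) (f := f) (g := fun a ↦ g a - g ⊤) hμ₀ hf₀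
      (fun a ↦ sub_nonneg.2 (hg (le_top (α := L)))) hf.dual_left
      (fun _ _ h ↦ sub_le_sub_right (hg h) _)
      fun a b ↦ (hμ a b).trans_eq (mul_comm _ _)
  simp only [mul_sub, Finset.sum_sub_distrib, ← mul_assoc, ← Finset.sum_mul] at hfkg ⊢
  linarith

theorem factorial_mul_factorial_add_le {a b : ℕ} (c : ℕ) (hab : a ≤ b) :
    (a + c).factorial * b.factorial ≤ a.factorial * (b + c).factorial := by
  rw [← Nat.factorial_mul_ascFactorial, ← Nat.factorial_mul_ascFactorial, mul_assoc,
    mul_comm (b.factorial)]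
  gcongr

variable {α : Type*} [DecidableEq α]

theorem factorial_card_mul_le_inter_mul_union (A B : Finset α) :
    A.card.factorial * B.card.factorial ≤ (A ∩ B).card.factorial * (A ∪ B).card.factorial := by
  have hA : A.card = (A ∩ B).card + (A \ B).card := (Finset.card_inter_add_card_sdiff A B).symm
  have hU : (A ∪ B).card = B.card + (A \ B).card := by
    rw [← Finset.card_sdiff_add_card, add_comm]
  rw [hA, hU]
  exact factorial_mul_factorial_add_le _ (Finset.card_le_card Finset.inter_subset_right)

variable [Fintype α] {F : Finset α → ℚ}

theorem sum_factorial_mul_nonneg (hadd : ∀ B, 0 ≤ F B + F Bᶜ) :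
    0 ≤ ∑ B : Finset α, (B.card.factorial * Bᶜ.card.factorial : ℚ) * F B := by
  have hsymm : ∑ B : Finset α, (B.card.factorial * Bᶜ.card.factorial : ℚ) * F B =
      ∑ B : Finset α, (B.card.factorial * Bᶜ.card.factorial : ℚ) * F Bᶜ :=
    Fintype.sum_equiv (compl_involutive.toPerm _) _ _ fun B ↦ by
      simp only [Function.Involutive.coe_toPerm, compl_compl, mul_comm]
  have htwo : 0 ≤ ∑ B : Finset α, (B.card.factorial * Bᶜ.card.factorial : ℚ) * (F B + F Bᶜ) :=
    Finset.sum_nonneg fun B _ ↦ mul_nonneg (by positivity) (hadd B)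
  simp only [mul_add, Finset.sum_add_distrib, ← hsymm] at htwo
  linarith

theorem sum_factorial_mul_factorial_succ_nonneg (hF : Antitone F)
    (hadd : ∀ B, 0 ≤ F B + F Bᶜ) :
    0 ≤ ∑ B : Finset α, (B.card.factorial * (Bᶜ.card + 1).factorial : ℚ) * F B := by
  -- FKG: `μ` is log-supermodular, and both `F` and the extra factor `f` are antitone.
  let μ : Finset α → ℚ := fun B ↦ B.card.factorial * Bᶜ.card.factorial
  let f : Finset α → ℚ := fun B ↦ Bᶜ.card + 1
  have hμ : ∀ A B, μ A * μ B ≤ μ (A ⊓ B) * μ (A ⊔ B) := fun A B ↦ by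
    have h := Nat.mul_le_mul (factorial_card_mul_le_inter_mul_union A B)
      (factorial_card_mul_le_inter_mul_union Aᶜ Bᶜ)
    rw [← Finset.compl_union, ← Finset.compl_inter, mul_mul_mul_comm,
      mul_comm (A ∪ B)ᶜ.card.factorial, mul_mul_mul_comm (A ∩ B).card.factorial] at h
    simp only [μ, Finset.inf_eq_inter, Finset.sup_eq_union]
    exact_mod_cast h
  have hf : Antitone f := fun A B h ↦
    add_le_add_left (Nat.cast_le.2 (Finset.card_le_card (Finset.compl_subset_compl.2 h))) 1
  have hμpos : ∀ B, 0 < μ B := fun B ↦ by positivity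
  have hcorr := fkg_antitone (fun B ↦ (hμpos B).le)
    (fun B ↦ by positivity : 0 ≤ f) hf hF hμ
  have hsum : 0 ≤ ∑ B, μ B * (f B * F B) := by
    refine nonneg_of_mul_nonneg_right (le_trans (mul_nonneg ?_ ?_) hcorr) ?_
    · exact Finset.sum_nonneg fun B _ ↦ by positivity
    · exact sum_factorial_mul_nonneg hadd
    · exact Finset.sum_pos (fun B _ ↦ hμpos B) Finset.univ_nonempty
  refine hsum.trans_eq (Finset.sum_congr rfl fun B _ ↦ ?_)
  simp only [μ, f, Nat.factorial_succ]
  push_cast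
  ring

theorem sum_factorial_mul_factorial_succ_pos [Subsingleton α] (hadd : ∀ B, 0 ≤ F B + F Bᶜ)
    (hF : 0 < F ∅) :
    0 < ∑ B : Finset α, (B.card.factorial * (Bᶜ.card + 1).factorial : ℚ) * F B := by
  rcases isEmpty_or_nonempty α with hα | hα
  · rw [Fintype.sum_subsingleton _ ∅]
    simpa using hF
  · have hcard : Fintype.card α = 1 :=
      le_antisymm (Fintype.card_le_one_iff_subsingleton.2 ‹_›) Fintype.card_pos
    have hcompl := hadd ∅
    rw [Fintype.sum_eq_add ∅ Finset.univ Finset.univ_nonempty.ne_empty.symm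
      fun B hB ↦ absurd (Finset.nonempty_iff_ne_empty.2 hB.1).eq_univ hB.2]
    rw [Finset.compl_empty] at hcompl
    suffices h : 0 < 2 * F ∅ + F Finset.univ by simpa [hcard] using h
    linarith

end Correlation

section ParentFunction

variable {n : ℕ} {f g : Fin (n + 1) → Fin (n + 1)} {v w t x y : Fin (n + 1)}
  {B C : Finset (Fin (n + 1))}

theorem ValidPF.apply_le (hf : ValidPF n f) (t : Fin (n + 1)) : f t ≤ t := by
  rw [Fin.le_def]
  rcases lt_or_ge t.val 2 with ht | ht
  · have := hf.1 t ht
    omega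
  · exact (hf.2 t ht).2.le

theorem ValidPF.iterate_le (hf : ValidPF n f) (i : ℕ) (t : Fin (n + 1)) : f^[i] t ≤ t :=
  Function.iterate_le_id_of_le_id hf.apply_le i t

theorem ValidPF.two_le_of_apply_eq (hf : ValidPF n f) (hv : 1 ≤ v.val) (h : f t = v) :
    2 ≤ t.val := by
  by_contra ht
  have := hf.1 t (by omega)
  rw [h] at this
  omega

theorem ValidPF.lt_of_apply_eq (hf : ValidPF n f) (hv : 1 ≤ v.val) (h : f t = v) : v < t :=
  h ▸ Fin.lt_def.2 (hf.2 t (hf.two_le_of_apply_eq hv h)).2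

theorem ValidPF.treeGraphPF_adj (hf : ValidPF n f) :
    (treeGraphPF n f).Adj x y ↔ (2 ≤ y.val ∧ f y = x) ∨ (2 ≤ x.val ∧ f x = y) := by
  rw [treeGraphPF, SimpleGraph.fromRel_adj, and_iff_right_iff_imp]
  rintro (⟨h, rfl⟩ | ⟨h, rfl⟩) heq
  · have := (hf.2 y h).2
    omega
  · have := (hf.2 x h).2
    omega

/-- A valid parent function in which `w` is a childless child of `v`. -/
structure IsLeafChildPF (n : ℕ) (v w : Fin (n + 1)) (g : Fin (n + 1) → Fin (n + 1)) :
    Prop where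
  valid : ValidPF n g
  apply_right : g w = v
  apply_ne_right : ∀ t, g t ≠ w

/-- The children of `v` other than `w`. -/
def siblings (g : Fin (n + 1) → Fin (n + 1)) (v w : Fin (n + 1)) : Finset (Fin (n + 1)) :=
  Finset.univ.filter fun t ↦ g t = v ∧ t ≠ w

/-- The parent function obtained from `g` by making every vertex of `B` a child of `w`. -/
def reparent (g : Fin (n + 1) → Fin (n + 1)) (w : Fin (n + 1)) (B : Finset (Fin (n + 1)))
    (t : Fin (n + 1)) : Fin (n + 1) :=
  if t ∈ B then w else g t

/-- The vertices of `B` together with everything below them in the tree of `g`. -/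
def descendants (g : Fin (n + 1) → Fin (n + 1)) (B : Finset (Fin (n + 1))) :
    Set (Fin (n + 1)) :=
  {x | ∃ i, g^[i] x ∈ B}

theorem mem_siblings : t ∈ siblings g v w ↔ g t = v ∧ t ≠ w :=
  Finset.mem_filter_univ t

theorem reparent_of_mem (ht : t ∈ B) : reparent g w B t = w :=
  if_pos ht

theorem reparent_of_notMem (ht : t ∉ B) : reparent g w B t = g t :=
  if_neg ht

theorem reparent_empty : reparent g w ∅ = g :=
  funext fun t ↦ reparent_of_notMem (Finset.notMem_empty t)

theorem mem_descendants_iff : x ∈ descendants g B ↔ x ∈ B ∨ g x ∈ descendants g B := by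
  constructor
  · rintro ⟨_ | i, hi⟩
    exacts [.inl hi, .inr ⟨i, hi⟩]
  · rintro (hx | ⟨i, hi⟩)
    exacts [⟨0, hx⟩, ⟨i + 1, hi⟩]

theorem mem_descendants_iff_of_notMem (hx : x ∉ B) :
    x ∈ descendants g B ↔ g x ∈ descendants g B := by
  rw [mem_descendants_iff, or_iff_right hx]

theorem descendants_mono (h : B ⊆ C) : descendants g B ⊆ descendants g C :=
  fun _ ⟨i, hi⟩ ↦ ⟨i, h hi⟩

theorem lt_of_mem_siblings (hg : ValidPF n g) (hv : 1 ≤ v.val) (hw : w.val = v.val + 1)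
    (ht : t ∈ siblings g v w) : w < t := by
  obtain ⟨htv, htw⟩ := mem_siblings.1 ht
  have := hg.lt_of_apply_eq hv htv
  omega

theorem lt_of_mem_descendants (hg : ValidPF n g) (hv : 1 ≤ v.val) (hw : w.val = v.val + 1)
    (hB : B ⊆ siblings g v w) (hx : x ∈ descendants g B) : w < x := by
  obtain ⟨i, hi⟩ := hx
  exact (lt_of_mem_siblings hg hv hw (hB hi)).trans_le (hg.iterate_le i x)

theorem left_notMem_descendants (hg : ValidPF n g) (hv : 1 ≤ v.val) (hw : w.val = v.val + 1)
    (hB : B ⊆ siblings g v w) : v ∉ descendants g B := fun h ↦ by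
  have := lt_of_mem_descendants hg hv hw hB h
  omega

theorem disjoint_descendants (hg : ValidPF n g) (hv : 1 ≤ v.val) (hw : w.val = v.val + 1)
    (hB : B ⊆ siblings g v w) (hC : C ⊆ siblings g v w) (hBC : Disjoint B C) :
    Disjoint (descendants g B) (descendants g C) := by
  rw [Set.disjoint_left]
  intro x
  induction x using WellFoundedLT.induction with
  | ind x ih =>
    intro hxB hxC
    have hwx := lt_of_mem_descendants hg hv hw hB hxB
    rcases mem_descendants_iff.1 hxB with hB' | hxB
    · rw [mem_descendants_iff_of_notMem (Finset.disjoint_left.1 hBC hB'),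
        (mem_siblings.1 (hB hB')).1] at hxC
      exact left_notMem_descendants hg hv hw hC hxC
    · rcases mem_descendants_iff.1 hxC with hC' | hxC
      · rw [(mem_siblings.1 (hC hC')).1] at hxB
        exact left_notMem_descendants hg hv hw hB hxB
      · exact ih (g x) (Fin.lt_def.2 (hg.2 x (by omega)).2) hxB hxC

theorem validPF_reparent (hg : ValidPF n g) (hv : 1 ≤ v.val) (hw : w.val = v.val + 1)
    (hB : B ⊆ siblings g v w) : ValidPF n (reparent g w B) := by
  refine ⟨fun t ht ↦ ?_, fun t ht ↦ ?_⟩ <;> by_cases htB : t ∈ B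
  · have := lt_of_mem_siblings hg hv hw (hB htB)
    omega
  · rw [reparent_of_notMem htB, hg.1 t ht]
  · rw [reparent_of_mem htB]
    exact ⟨by omega, lt_of_mem_siblings hg hv hw (hB htB)⟩
  · rw [reparent_of_notMem htB]
    exact hg.2 t ht

namespace IsLeafChildPF

theorem isPendant (hg : IsLeafChildPF n v w g) (hv : 1 ≤ v.val) :
    IsPendant (treeGraphPF n g) v w := fun x ↦ by
  have hw := hg.valid.two_le_of_apply_eq hv hg.apply_right
  simp only [hg.valid.treeGraphPF_adj, hg.apply_ne_right, and_false, false_or, hw, true_and,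
    hg.apply_right, eq_comm]

theorem isTransplant_reparent (hg : IsLeafChildPF n v w g) (hv : 1 ≤ v.val)
    (hw : w.val = v.val + 1) (hB : B ⊆ siblings g v w) :
    IsTransplant (treeGraphPF n g) (treeGraphPF n (reparent g w B)) v w (descendants g B) := by
  have hwM : w ∉ descendants g B :=
    fun h ↦ (lt_of_mem_descendants hg.valid hv hw hB h).false
  have hvM : v ∉ descendants g B := left_notMem_descendants hg.valid hv hw hB
  have hBM : ∀ t ∈ B, t ∈ descendants g B := fun t ht ↦ ⟨0, ht⟩
  have hBv : ∀ t ∈ B, g t = v := fun t ht ↦ (mem_siblings.1 (hB ht)).1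
  have hMB : ∀ t ∉ B, (t ∈ descendants g B ↔ g t ∈ descendants g B) :=
    fun t ↦ mem_descendants_iff_of_notMem
  have hin : ∀ t ∈ B, reparent g w B t = w := fun t ↦ reparent_of_mem
  have hout : ∀ t ∉ B, reparent g w B t = g t := fun t ↦ reparent_of_notMem
  have hne := hg.apply_ne_right
  have hright := hg.apply_right
  refine ⟨hg.isPendant hv, hvM, hwM, ?_, ?_, ?_, ?_, ?_⟩ <;> intro x <;> try intro y
  all_goals simp only [hg.valid.treeGraphPF_adj,
      (validPF_reparent hg.valid hv hw hB).treeGraphPF_adj]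
  all_goals grind

end IsLeafChildPF

end ParentFunction

section Probability

theorem prod_card_filter_le_eq_factorial {α : Type*} [LinearOrder α] (X : Finset α) :
    ∏ t ∈ X, (X.filter (· ≤ t)).card = X.card.factorial := by
  induction X using Finset.induction_on_max with
  | empty => simp
  | insert a X hX ih =>
    have ha : a ∉ X := fun h ↦ (hX a h).false
    rw [Finset.prod_insert ha, Finset.card_insert_of_notMem ha, Nat.factorial_succ, ← ih]
    congr 1
    · rw [Finset.filter_true_of_mem, Finset.card_insert_of_notMem ha]
      exact Finset.forall_mem_insert _ _ _ |>.2 ⟨le_rfl, fun x hx ↦ (hX x hx).le⟩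
    · refine Finset.prod_congr rfl fun t ht ↦ ?_
      rw [Finset.filter_insert, if_neg (hX t ht).not_ge]

variable {n : ℕ} {f g : Fin (n + 1) → Fin (n + 1)} {v w t u : Fin (n + 1)}
  {B : Finset (Fin (n + 1))}

/-- The children of `u` in the tree of `f`. The condition `2 ≤ s` excludes the vertices `0` and
`1`, at which a valid parent function takes the junk value `0`. -/
def children (f : Fin (n + 1) → Fin (n + 1)) (u : Fin (n + 1)) : Finset (Fin (n + 1)) :=
  Finset.univ.filter fun s ↦ 2 ≤ s.val ∧ f s = u

theorem mem_children : t ∈ children f u ↔ 2 ≤ t.val ∧ f t = u :=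
  Finset.mem_filter_univ t

theorem degPF_apply_eq_card_filter_children (ht : t ∈ children f u) :
    degPF n f (t.val - 1) (f t) = ((children f u).filter (· ≤ t)).card := by
  obtain ⟨ht2, rfl⟩ := mem_children.1 ht
  have hinsert : (children f (f t)).filter (· ≤ t) = insert t
      (Finset.univ.filter fun s : Fin (n + 1) ↦ 2 ≤ s.val ∧ s.val ≤ t.val - 1 ∧ f s = f t) := by
    ext s
    simp only [Finset.mem_filter, mem_children, Finset.mem_univ, true_and, Finset.mem_insert]
    grind
  rw [hinsert, Finset.card_insert_of_notMem, degPF, add_comm]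
  simp only [Finset.mem_filter]
  omega

/-- The normalising constant `∏_{t=2}^{n} (2t - 3)` of the scale-free model. -/
def normPF (n : ℕ) : ℚ :=
  ∏ t ∈ Finset.univ.filter (fun t : Fin (n + 1) ↦ 2 ≤ t.val), (2 * (t.val : ℚ) - 3)

theorem normPF_pos (n : ℕ) : 0 < normPF n :=
  Finset.prod_pos fun t ht ↦ by
    have : (2 : ℚ) ≤ t.val := by exact_mod_cast (Finset.mem_filter.1 ht).2
    linarith

theorem probPF_eq_prod_factorial_div (n : ℕ) (f : Fin (n + 1) → Fin (n + 1)) :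
    probPF n f = (∏ u, ((children f u).card.factorial : ℚ)) / normPF n := by
  rw [probPF, normPF, Finset.prod_div_distrib,
    ← Finset.prod_fiberwise (Finset.univ.filter fun t : Fin (n + 1) ↦ 2 ≤ t.val) f]
  congr 1
  refine Finset.prod_congr rfl fun u _ ↦ ?_
  rw [← prod_card_filter_le_eq_factorial, Nat.cast_prod, Finset.filter_filter]
  exact Finset.prod_congr rfl fun t ht ↦ by rw [degPF_apply_eq_card_filter_children ht]

theorem children_reparent_right (hg : IsLeafChildPF n v w g) (hv : 1 ≤ v.val)
    (hB : B ⊆ siblings g v w) : children (reparent g w B) w = B := by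
  ext t
  have hBt : t ∈ B → 2 ≤ t.val := fun h ↦
    hg.valid.two_le_of_apply_eq hv (mem_siblings.1 (hB h)).1
  have := hg.apply_ne_right t
  rw [mem_children, reparent]
  grind

theorem children_reparent_left (hg : IsLeafChildPF n v w g) (hv : 1 ≤ v.val) (hvw : v ≠ w)
    (hB : B ⊆ siblings g v w) :
    children (reparent g w B) v = insert w (siblings g v w \ B) := by
  ext t
  have hBt : t ∈ B → t ≠ w := fun h ↦ (mem_siblings.1 (hB h)).2
  have htwo : g t = v → 2 ≤ t.val := hg.valid.two_le_of_apply_eq hv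
  have := hg.apply_right
  rw [mem_children, reparent, Finset.mem_insert, Finset.mem_sdiff, mem_siblings]
  grind

theorem children_reparent_of_ne (hB : B ⊆ siblings g v w) (huv : u ≠ v) (huw : u ≠ w) :
    children (reparent g w B) u = children g u := by
  ext t
  have hBt : t ∈ B → g t = v := fun h ↦ (mem_siblings.1 (hB h)).1
  rw [mem_children, mem_children, reparent]
  grind

theorem exists_probPF_reparent_eq (hg : IsLeafChildPF n v w g) (hv : 1 ≤ v.val) :
    ∃ Q : ℚ, 0 < Q ∧ ∀ B ⊆ siblings g v w, probPF n (reparent g w B) =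
      Q * (B.card.factorial * ((siblings g v w \ B).card + 1).factorial) := by
  have hvw : v ≠ w := (hg.isPendant hv).adj.ne
  refine ⟨(∏ u ∈ (Finset.univ.erase v).erase w, ((children g u).card.factorial : ℚ)) / normPF n,
    div_pos (Finset.prod_pos fun u _ ↦ by positivity) (normPF_pos n), fun B hB ↦ ?_⟩
  have hother : ∏ u ∈ (Finset.univ.erase v).erase w,
      ((children (reparent g w B) u).card.factorial : ℚ) =
      ∏ u ∈ (Finset.univ.erase v).erase w, ((children g u).card.factorial : ℚ) :=
    Finset.prod_congr rfl fun u hu ↦ by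
      rw [Finset.mem_erase, Finset.mem_erase] at hu
      rw [children_reparent_of_ne hB hu.2.1 hu.1]
  have hw : w ∉ siblings g v w \ B := fun h ↦
    (mem_siblings.1 (Finset.mem_sdiff.1 h).1).2 rfl
  rw [probPF_eq_prod_factorial_div, ← Finset.mul_prod_erase _ _ (Finset.mem_univ v),
    ← Finset.mul_prod_erase (Finset.univ.erase v) _
      (Finset.mem_erase.2 ⟨hvw.symm, Finset.mem_univ w⟩), hother,
    children_reparent_left hg hv hvw hB, children_reparent_right hg hv hB,
    Finset.card_insert_of_notMem hw]
  ring

end Probability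

section MoveSiblings

variable {n k : ℕ} {f g : Fin (n + 1) → Fin (n + 1)} {v w : Fin (n + 1)}

/-- The parent function obtained from `g` by making the siblings of `w` in `B` children of `w`.
Taking `B` over a subtype makes the set of all moves a Boolean algebra. -/
def moveSiblings (g : Fin (n + 1) → Fin (n + 1)) (v w : Fin (n + 1))
    (B : Finset (siblings g v w)) : Fin (n + 1) → Fin (n + 1) :=
  reparent g w (B.map (Function.Embedding.subtype _))

/-- The contribution of the tree of `f` to twice `E[p_k(v)] - E[p_k(w)]`. -/
def weightedImbalance (n k : ℕ) (v w : Fin (n + 1)) (f : Fin (n + 1) → Fin (n + 1)) : ℚ :=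
  probPF n f * imbalance (treeGraphPF n f) k v w

theorem map_subtype_subset_siblings (B : Finset (siblings g v w)) :
    B.map (Function.Embedding.subtype _) ⊆ siblings g v w :=
  fun _ ↦ Finset.property_of_mem_map_subtype B

theorem moveSiblings_empty : moveSiblings g v w ∅ = g := by
  rw [moveSiblings, Finset.map_empty, reparent_empty]

theorem card_siblings_sdiff_map (B : Finset (siblings g v w)) :
    (siblings g v w \ B.map (Function.Embedding.subtype _)).card = Bᶜ.card := by
  rw [Finset.card_sdiff_of_subset (map_subtype_subset_siblings B), Finset.card_map,
    Finset.card_compl, Fintype.card_coe]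

namespace IsLeafChildPF

theorem isTransplant_moveSiblings (hg : IsLeafChildPF n v w g) (hv : 1 ≤ v.val)
    (hw : w.val = v.val + 1) (B : Finset (siblings g v w)) :
    IsTransplant (treeGraphPF n g) (treeGraphPF n (moveSiblings g v w B)) v w
      (descendants g (B.map (Function.Embedding.subtype _))) :=
  hg.isTransplant_reparent hv hw (map_subtype_subset_siblings B)

theorem antitone_imbalance_moveSiblings (hg : IsLeafChildPF n v w g) (hv : 1 ≤ v.val)
    (hw : w.val = v.val + 1) (hk : k ≠ 0) :
    Antitone fun B ↦ imbalance (treeGraphPF n (moveSiblings g v w B)) k v w := fun B C hBC ↦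
  (hg.isTransplant_moveSiblings hv hw B).imbalance_le (hg.isTransplant_moveSiblings hv hw C) hk
    (descendants_mono (Finset.map_subset_map.2 hBC))

theorem imbalance_moveSiblings_add_compl_nonneg (hg : IsLeafChildPF n v w g) (hv : 1 ≤ v.val)
    (hw : w.val = v.val + 1) (hk : k ≠ 0) (B : Finset (siblings g v w)) :
    0 ≤ imbalance (treeGraphPF n (moveSiblings g v w B)) k v w +
      imbalance (treeGraphPF n (moveSiblings g v w Bᶜ)) k v w :=
  (hg.isTransplant_moveSiblings hv hw B).imbalance_add_nonneg
    (hg.isTransplant_moveSiblings hv hw Bᶜ) hk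
    (disjoint_descendants hg.valid hv hw (map_subtype_subset_siblings B)
      (map_subtype_subset_siblings Bᶜ) ((Finset.disjoint_map _).2 disjoint_compl_right))

theorem exists_sum_weightedImbalance_eq (hg : IsLeafChildPF n v w g) (hv : 1 ≤ v.val) (k : ℕ) :
    ∃ Q : ℚ, 0 < Q ∧ ∑ B, weightedImbalance n k v w (moveSiblings g v w B) =
      Q * ∑ B : Finset (siblings g v w), (B.card.factorial * (Bᶜ.card + 1).factorial : ℚ) *
        imbalance (treeGraphPF n (moveSiblings g v w B)) k v w := by
  obtain ⟨Q, hQ, hprob⟩ := exists_probPF_reparent_eq hg hv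
  refine ⟨Q, hQ, ?_⟩
  rw [Finset.mul_sum]
  refine Finset.sum_congr rfl fun B _ ↦ ?_
  rw [weightedImbalance, ← mul_assoc, moveSiblings, hprob _ (map_subtype_subset_siblings B),
    card_siblings_sdiff_map, Finset.card_map]

theorem sum_weightedImbalance_moveSiblings_nonneg (hg : IsLeafChildPF n v w g)
    (hv : 1 ≤ v.val) (hw : w.val = v.val + 1) (hk : k ≠ 0) :
    0 ≤ ∑ B, weightedImbalance n k v w (moveSiblings g v w B) := by
  obtain ⟨Q, hQ, hsum⟩ := hg.exists_sum_weightedImbalance_eq hv k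
  rw [hsum]
  exact mul_nonneg hQ.le <| sum_factorial_mul_factorial_succ_nonneg
    (hg.antitone_imbalance_moveSiblings hv hw hk)
    (hg.imbalance_moveSiblings_add_compl_nonneg hv hw hk)

theorem sum_weightedImbalance_moveSiblings_pos [Subsingleton (siblings g v w)]
    (hg : IsLeafChildPF n v w g) (hv : 1 ≤ v.val) (hw : w.val = v.val + 1) (hk : k ≠ 0)
    (hpos : 0 < imbalance (treeGraphPF n g) k v w) :
    0 < ∑ B, weightedImbalance n k v w (moveSiblings g v w B) := by
  obtain ⟨Q, hQ, hsum⟩ := hg.exists_sum_weightedImbalance_eq hv k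
  rw [hsum]
  exact mul_pos hQ <| sum_factorial_mul_factorial_succ_pos
    (hg.imbalance_moveSiblings_add_compl_nonneg hv hw hk) (by rwa [moveSiblings_empty])

end IsLeafChildPF

/-- The parent function obtained from `f` by making every child of `w` a child of `v`. -/
def collapse (f : Fin (n + 1) → Fin (n + 1)) (v w : Fin (n + 1)) (t : Fin (n + 1)) :
    Fin (n + 1) :=
  if f t = w then v else f t

theorem isLeafChildPF_collapse (hf : ValidPF n f) (hv : 1 ≤ v.val) (hvw : v < w)
    (hfw : f w = v) : IsLeafChildPF n v w (collapse f v w) := by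
  have happly : ∀ t, f t = w → 2 ≤ t.val ∧ v < t := fun t ht ↦
    ⟨hf.two_le_of_apply_eq (by omega) ht, hvw.trans (hf.lt_of_apply_eq (by omega) ht)⟩
  refine ⟨⟨fun t ht ↦ ?_, fun t ht ↦ ?_⟩, ?_, fun t ↦ ?_⟩
  · rw [collapse, if_neg fun h ↦ by have := happly t h; omega, hf.1 t ht]
  · rw [collapse]
    split_ifs with h
    exacts [⟨hv, (happly t h).2⟩, hf.2 t ht]
  · rw [collapse, hfw, if_neg hvw.ne]
  · rw [collapse]
    split_ifs with h
    exacts [hvw.ne, h]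

theorem collapse_reparent (hg : IsLeafChildPF n v w g) {B : Finset (Fin (n + 1))}
    (hB : B ⊆ siblings g v w) : collapse (reparent g w B) v w = g := by
  funext t
  by_cases ht : t ∈ B
  · rw [collapse, reparent_of_mem ht, if_pos rfl, (mem_siblings.1 (hB ht)).1]
  · rw [collapse, reparent_of_notMem ht, if_neg (hg.apply_ne_right t)]

theorem filter_reparent_eq (hg : IsLeafChildPF n v w g) (B : Finset (Fin (n + 1))) :
    (Finset.univ.filter fun t ↦ reparent g w B t = w) = B := by
  ext t
  simp [reparent, hg.apply_ne_right]

theorem reparent_collapse : reparent (collapse f v w) w (Finset.univ.filter (f · = w)) = f := by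
  funext t
  simp only [reparent, collapse, Finset.mem_filter_univ]
  split_ifs with h
  exacts [h.symm, rfl]

theorem filter_apply_eq_subset_siblings_collapse (hvw : v ≠ w) (hfw : f w = v) :
    Finset.univ.filter (f · = w) ⊆ siblings (collapse f v w) v w := fun t ht ↦ by
  rw [Finset.mem_filter_univ] at ht
  refine mem_siblings.2 ⟨if_pos ht, ?_⟩
  rintro rfl
  exact hvw (hfw.symm.trans ht)

theorem sum_powerset_eq_sum_map_subtype {α M : Type*} [AddCommMonoid M] (S : Finset α)
    (F : Finset α → M) :
    ∑ B ∈ S.powerset, F B = ∑ B : Finset S, F (B.map (Function.Embedding.subtype _)) :=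
  Finset.sum_bij' (fun B _ ↦ B.subtype (· ∈ S))
    (fun B _ ↦ B.map (Function.Embedding.subtype _)) (fun _ _ ↦ Finset.mem_univ _)
    (fun B _ ↦ Finset.mem_powerset.2 fun _ ↦ Finset.property_of_mem_map_subtype B)
    (fun _ hB ↦ Finset.subtype_map_of_mem (Finset.mem_powerset.1 hB)) (fun B _ ↦ by ext; simp)
    fun _ hB ↦ by rw [Finset.subtype_map_of_mem (Finset.mem_powerset.1 hB)]

theorem sum_filter_apply_eq_eq_sum_moveSiblings (hv : 1 ≤ v.val) (hw : w.val = v.val + 1)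
    {M : Type*} [AddCommMonoid M] (F : (Fin (n + 1) → Fin (n + 1)) → M) :
    ∑ f with ValidPF n f ∧ f w = v, F f =
      ∑ g with IsLeafChildPF n v w g, ∑ B, F (moveSiblings g v w B) := by
  have hvw : v < w := by omega
  rw [← Finset.sum_fiberwise_of_maps_to (g := fun f ↦ collapse f v w)
    (t := Finset.univ.filter (IsLeafChildPF n v w)) fun f hf ↦ by
      rw [Finset.mem_filter_univ] at hf ⊢
      exact isLeafChildPF_collapse hf.1 hv hvw hf.2]
  refine Finset.sum_congr rfl fun g hg ↦ ?_
  rw [Finset.mem_filter_univ] at hg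
  refine Eq.trans ?_ (sum_powerset_eq_sum_map_subtype _ fun B ↦ F (reparent g w B))
  rw [Finset.filter_filter]
  refine Finset.sum_bij' (fun f _ ↦ Finset.univ.filter (f · = w)) (fun B _ ↦ reparent g w B)
    (fun f hf ↦ ?_) (fun B hB ↦ ?_) (fun f hf ↦ ?_) (fun B _ ↦ filter_reparent_eq hg B)
    (fun f hf ↦ ?_)
  · obtain ⟨⟨-, hfw⟩, rfl⟩ := (Finset.mem_filter_univ _).1 hf
    exact Finset.mem_powerset.2 (filter_apply_eq_subset_siblings_collapse hvw.ne hfw)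
  · rw [Finset.mem_powerset] at hB
    have hwB : w ∉ B := fun h ↦ (mem_siblings.1 (hB h)).2 rfl
    exact (Finset.mem_filter_univ _).2 ⟨⟨validPF_reparent hg.valid hv hw hB,
      (reparent_of_notMem hwB).trans hg.apply_right⟩, collapse_reparent hg hB⟩
  · obtain ⟨-, rfl⟩ := (Finset.mem_filter_univ _).1 hf
    exact reparent_collapse
  · obtain ⟨-, rfl⟩ := (Finset.mem_filter_univ _).1 hf
    rw [reparent_collapse]

end MoveSiblings

section Relabel

variable {n k : ℕ} {σ : Equiv.Perm (Fin (n + 1))} {f : Fin (n + 1) → Fin (n + 1)}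
  {v w : Fin (n + 1)}

/-- The parent function obtained from `f` by renaming every vertex `t` to `σ t`. -/
def relabel (σ : Equiv.Perm (Fin (n + 1))) (f : Fin (n + 1) → Fin (n + 1)) (t : Fin (n + 1)) :
    Fin (n + 1) :=
  σ (f (σ.symm t))

theorem card_children_relabel (hσ : ∀ t, 2 ≤ (σ t).val ↔ 2 ≤ t.val) (u : Fin (n + 1)) :
    (children (relabel σ f) (σ u)).card = (children f u).card := by
  refine (Finset.card_equiv σ fun t ↦ ?_).symm
  rw [mem_children, mem_children, hσ, relabel, σ.symm_apply_apply, σ.apply_eq_iff_eq]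

theorem probPF_relabel (hσ : ∀ t, 2 ≤ (σ t).val ↔ 2 ≤ t.val) :
    probPF n (relabel σ f) = probPF n f := by
  rw [probPF_eq_prod_factorial_div, probPF_eq_prod_factorial_div, ← Equiv.prod_comp σ]
  simp only [card_children_relabel hσ]

theorem treeGraphPF_relabel_adj (hσ : ∀ t, 2 ≤ (σ t).val ↔ 2 ≤ t.val) (x y : Fin (n + 1)) :
    (treeGraphPF n (relabel σ f)).Adj (σ x) (σ y) ↔ (treeGraphPF n f).Adj x y := by
  simp only [treeGraphPF, SimpleGraph.fromRel_adj, relabel, hσ, σ.symm_apply_apply,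
    σ.apply_eq_iff_eq, ne_eq]

theorem dist_relabel (hσ : ∀ t, 2 ≤ (σ t).val ↔ 2 ≤ t.val) (x y : Fin (n + 1)) :
    (treeGraphPF n (relabel σ f)).dist (σ x) (σ y) = (treeGraphPF n f).dist x y := by
  refine IsWeakHom.dist_eq (φ := σ) (ψ := σ.symm) (fun a b hab ↦ .inr ?_)
    (fun a b hab ↦ .inr ?_) (σ.symm_apply_apply x) (σ.symm_apply_apply y)
  · exact (treeGraphPF_relabel_adj hσ a b).2 hab
  · rwa [← treeGraphPF_relabel_adj hσ, σ.apply_symm_apply, σ.apply_symm_apply]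

theorem weightedImbalance_relabel (hσ : ∀ t, 2 ≤ (σ t).val ↔ 2 ≤ t.val) :
    weightedImbalance n k (σ v) (σ w) (relabel σ f) = weightedImbalance n k v w f := by
  simp only [weightedImbalance, imbalance, probPF_relabel hσ,
    card_interiorPairs_of_dist_eq σ (dist_relabel hσ)]

theorem relabel_swap_relabel_swap :
    relabel (Equiv.swap v w) (relabel (Equiv.swap v w) f) = f := by
  funext t
  simp only [relabel, Equiv.symm_swap, Equiv.swap_apply_self]

theorem two_le_swap_iff (hv : 2 ≤ v.val) (hw : 2 ≤ w.val) (t : Fin (n + 1)) :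
    2 ≤ (Equiv.swap v w t).val ↔ 2 ≤ t.val := by
  rw [Equiv.swap_apply_def]
  split_ifs <;> simp_all

theorem ValidPF.two_le_of_apply_ne (hf : ValidPF n f) (hv : 1 ≤ v.val)
    (hw : w.val = v.val + 1) (hfw : f w ≠ v) : 2 ≤ v.val := by
  have := hf.2 w (by omega)
  omega

theorem ValidPF.relabel_swap (hf : ValidPF n f) (hv : 1 ≤ v.val) (hw : w.val = v.val + 1)
    (hfw : f w ≠ v) :
    ValidPF n (relabel (Equiv.swap v w) f) ∧ relabel (Equiv.swap v w) f w ≠ v := by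
  have hv2 := hf.two_le_of_apply_ne hv hw hfw
  have hfv := hf.2 v hv2
  have hfw' := hf.2 w (by omega)
  refine ⟨⟨fun t ht ↦ ?_, fun t ht ↦ ?_⟩, ?_⟩
  · have := hf.1 t ht
    simp only [relabel, Equiv.symm_swap, Equiv.swap_apply_def]
    grind
  · have := hf.2 t ht
    simp only [relabel, Equiv.symm_swap, Equiv.swap_apply_def]
    grind
  · simp only [relabel, Equiv.symm_swap, Equiv.swap_apply_def]
    grind

theorem sum_weightedImbalance_filter_apply_ne (hv : 1 ≤ v.val) (hw : w.val = v.val + 1)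
    (k : ℕ) : ∑ f with ValidPF n f ∧ f w ≠ v, weightedImbalance n k v w f = 0 := by
  have hmem : ∀ f ∈ Finset.univ.filter (fun f ↦ ValidPF n f ∧ f w ≠ v),
      relabel (Equiv.swap v w) f ∈ Finset.univ.filter (fun f ↦ ValidPF n f ∧ f w ≠ v) := by
    intro f hf
    rw [Finset.mem_filter_univ] at hf ⊢
    exact hf.1.relabel_swap hv hw hf.2
  rw [← self_eq_neg, ← Finset.sum_neg_distrib]
  refine Finset.sum_nbij' (relabel (Equiv.swap v w)) (relabel (Equiv.swap v w)) hmem hmem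
    (fun _ _ ↦ relabel_swap_relabel_swap) (fun _ _ ↦ relabel_swap_relabel_swap) fun f hf ↦ ?_
  obtain ⟨hval, hfw⟩ := (Finset.mem_filter_univ _).1 hf
  have hσ := two_le_swap_iff (hval.two_le_of_apply_ne hv hw hfw) (w := w) (by omega)
  rw [← weightedImbalance_relabel hσ, Equiv.swap_apply_left, Equiv.swap_apply_right,
    weightedImbalance, weightedImbalance, imbalance_comm, mul_neg]

end Relabel

section LeafPath

variable {n k : ℕ} {v w : Fin (n + 1)}

/-- The parent function whose tree is the path `v + 1, v, …, 2, 1, v + 2, v + 3, …, n`.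
Truncated subtraction provides the value `0` at `0` and `1`. -/
def leafPathPF (n : ℕ) (v t : Fin (n + 1)) : Fin (n + 1) :=
  ⟨if t.val = v.val + 2 then 1 else t.val - 1, by split_ifs <;> omega⟩

theorem isLeafChildPF_leafPathPF (hv : 1 ≤ v.val) (hw : w.val = v.val + 1) :
    IsLeafChildPF n v w (leafPathPF n v) := by
  refine ⟨⟨fun t ht ↦ ?_, fun t ht ↦ ?_⟩, ?_, fun t ↦ ?_⟩ <;>
    simp only [leafPathPF, ne_eq, Fin.ext_iff] <;> split_ifs <;> omega

theorem subsingleton_siblings_leafPathPF (hv : 1 ≤ v.val) (hw : w.val = v.val + 1) :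
    Subsingleton (siblings (leafPathPF n v) v w) := by
  have hval : ∀ t ∈ siblings (leafPathPF n v) v w, t.val = v.val + 2 := by
    intro t ht
    simp only [mem_siblings, leafPathPF, ne_eq, Fin.ext_iff] at ht
    split_ifs at ht <;> omega
  exact ⟨fun s t ↦ Subtype.ext (Fin.ext ((hval s s.2).trans (hval t t.2).symm))⟩

/-- The `i`-th vertex after `v` on the path `v, …, 2, 1, v + 2, v + 3, …, n`,
meaningful for `i + 2 ≤ n`; beyond that `Fin.ofNat` wraps around. -/
def leafPathVertex (n : ℕ) (v : Fin (n + 1)) (i : ℕ) : Fin (n + 1) :=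
  Fin.ofNat (n + 1) (if i < v.val then v.val - i else i + 2)

theorem val_leafPathVertex {i : ℕ} (hi : i + 2 ≤ n) :
    (leafPathVertex n v i).val = if i < v.val then v.val - i else i + 2 :=
  Nat.mod_eq_of_lt (by split_ifs <;> omega)

theorem leafPathVertex_zero (hv : 1 ≤ v.val) : leafPathVertex n v 0 = v := by
  rw [leafPathVertex, if_pos (by omega), Nat.sub_zero, Fin.ofNat_val_eq_self]

/-- The distance from `v` in the tree of `leafPathPF n v`, at every vertex but the unused `0`. -/
def leafPathPos (v x : Fin (n + 1)) : ℕ :=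
  if x.val ≤ v.val then v.val - x.val else if x.val = v.val + 1 then 1 else x.val - 2

theorem reachable_and_dist_leafPathVertex (hv : 1 ≤ v.val) (hw : w.val = v.val + 1)
    {m : ℕ} (hm : m + 2 ≤ n) :
    (treeGraphPF n (leafPathPF n v)).Reachable v (leafPathVertex n v m) ∧
      (treeGraphPF n (leafPathPF n v)).dist v (leafPathVertex n v m) = m := by
  have hvalid := (isLeafChildPF_leafPathPF hv hw).valid
  have hchain : ∀ i < m, (treeGraphPF n (leafPathPF n v)).Adj (leafPathVertex n v i)
      (leafPathVertex n v (i + 1)) := fun i hi ↦ by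
    simp only [hvalid.treeGraphPF_adj, leafPathPF, Fin.ext_iff,
      val_leafPathVertex (show i + 2 ≤ n by omega),
      val_leafPathVertex (show i + 1 + 2 ≤ n by omega)]
    grind
  have hlip : ∀ ⦃x y⦄, (treeGraphPF n (leafPathPF n v)).Adj x y →
      leafPathPos v y ≤ leafPathPos v x + 1 := fun x y hxy ↦ by
    simp only [hvalid.treeGraphPF_adj, leafPathPF, Fin.ext_iff] at hxy
    simp only [leafPathPos]
    grind
  have hpos : leafPathPos v (leafPathVertex n v m) = m := by
    simp only [leafPathPos, val_leafPathVertex hm]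
    grind
  have hzero : leafPathPos v (leafPathVertex n v 0) = 0 := by
    simp [leafPathVertex_zero hv, leafPathPos]
  simpa only [leafPathVertex_zero hv] using
    reachable_and_dist_eq_of_adj_succ hchain hlip hzero hpos

theorem imbalance_leafPathPF_pos (hv : 1 ≤ v.val) (hw : w.val = v.val + 1) (hk : 2 ≤ k)
    (hkn : k + 1 ≤ n) : 0 < imbalance (treeGraphPF n (leafPathPF n v)) k v w := by
  obtain ⟨m, rfl⟩ := Nat.exists_eq_add_of_le' hk
  obtain ⟨hr, hd⟩ := reachable_and_dist_leafPathVertex hv hw (m := m + 1) (by omega)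
  have hval := val_leafPathVertex (v := v) (i := m + 1) (by omega)
  have hpos := ((isLeafChildPF_leafPathPF hv hw).isPendant hv).imbalance_pos hr.symm
    (by rintro h; rw [h] at hval; split_ifs at hval <;> omega)
    (by rintro h; rw [h] at hval; split_ifs at hval <;> omega)
  rwa [SimpleGraph.dist_comm, hd] at hpos

end LeafPath

section Expectation

variable {n k : ℕ} {v w : Fin (n + 1)}

theorem pexactPF_eq_card_div_two (hk : k ≠ 0) (f : Fin (n + 1) → Fin (n + 1))
    (v : Fin (n + 1)) :
    (pexactPF n f k v : ℚ) = (interiorPairs (treeGraphPF n f) k v).card / 2 :=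
  Nat.cast_div_charZero (even_card_interiorPairs hk).two_dvd

theorem sum_probPF_mul_pexactPF_sub (hk : k ≠ 0) (v w : Fin (n + 1)) :
    ∑ f with ValidPF n f, probPF n f * (pexactPF n f k v : ℚ) -
      ∑ f with ValidPF n f, probPF n f * (pexactPF n f k w : ℚ) =
    (∑ f with ValidPF n f, weightedImbalance n k v w f) / 2 := by
  rw [← Finset.sum_sub_distrib, Finset.sum_div]
  refine Finset.sum_congr rfl fun f _ ↦ ?_
  rw [pexactPF_eq_card_div_two hk, pexactPF_eq_card_div_two hk, weightedImbalance, imbalance]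
  ring

theorem sum_weightedImbalance_filter_apply_eq_pos (hv : 1 ≤ v.val) (hw : w.val = v.val + 1)
    (hk : 2 ≤ k) (hkn : k + 1 ≤ n) :
    0 < ∑ f with ValidPF n f ∧ f w = v, weightedImbalance n k v w f := by
  have hk0 : k ≠ 0 := by omega
  have := subsingleton_siblings_leafPathPF (n := n) hv hw
  have hpath := isLeafChildPF_leafPathPF (n := n) hv hw
  rw [sum_filter_apply_eq_eq_sum_moveSiblings hv hw]
  refine Finset.sum_pos' (fun g hg ↦ ?_)
    ⟨leafPathPF n v, (Finset.mem_filter_univ _).2 hpath, ?_⟩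
  · exact ((Finset.mem_filter_univ _).1 hg).sum_weightedImbalance_moveSiblings_nonneg hv hw hk0
  · exact hpath.sum_weightedImbalance_moveSiblings_pos hv hw hk0
      (imbalance_leafPathPF_pos hv hw hk hkn)

end Expectation

/-- In the scale-free random recursive tree `T_n` (`n ≥ 3`), for `1 ≤ v ≤ n - 1` and
`2 ≤ k ≤ n - 1`, the expected number of paths of length exactly `k` with `v` as an
interior vertex strictly exceeds that for `v + 1`. -/
theorem expected_pexact_strictly_decreasing (n : ℕ) (hn : 3 ≤ n) (v w : Fin (n+1))
    (hv : 1 ≤ v.val) (hvn : v.val ≤ n - 1) (hw : w.val = v.val + 1)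
    (k : ℕ) (hk2 : 2 ≤ k) (hkn : k ≤ n - 1) :
    ∑ f ∈ Finset.univ.filter (fun f : Fin (n+1) → Fin (n+1) => ValidPF n f),
        probPF n f * (pexactPF n f k v : ℚ)
      > ∑ f ∈ Finset.univ.filter (fun f : Fin (n+1) → Fin (n+1) => ValidPF n f),
        probPF n f * (pexactPF n f k w : ℚ) := by
  have hpos := sum_weightedImbalance_filter_apply_eq_pos hv hw hk2 (n := n) (by omega)
  have hzero := sum_weightedImbalance_filter_apply_ne hv hw k
  have hsplit := Finset.sum_filter_add_sum_filter_not
    (Finset.univ.filter (ValidPF n)) (fun f ↦ f w = v) (weightedImbalance n k v w)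
  rw [Finset.filter_filter, Finset.filter_filter, hzero, add_zero] at hsplit
  rw [gt_iff_lt, ← sub_pos, sum_probPF_mul_pexactPF_sub (by omega), ← hsplit]
  exact half_pos hpos

end
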